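/- Let 0<α<1, λ > 0, c ∈ ℝ, T > 0, and let F be continuously differentiable on [0,T]. Then the function T_*(t) = c E_α(−λ t^α) + ∫₀ᵗ τ^{α−1} E_{α,α}(−λ τ^α) F(t−τ) dτ is continuous on [0,T] with T_*(0) = c, and satisfies the fractional differential equation (D^α T_*)(t) = −λ T_*(t) + F(t) for all t ∈ (0,T], where D^α is the Caputo fractional derivative. -/

import Mathlib

open MeasureTheory Set Filter

/-- The Caputo fractional derivative of order `α` of `f` at `t`:
`(D^α f)(t) = (1/Γ(1−α)) ∫₀ᵗ (t−s)^{−α} f'(s) ds`. -/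
noncomputable def caputo (α : ℝ) (f : ℝ → ℝ) (t : ℝ) : ℝ :=
  (1 / Real.Gamma (1 - α)) * ∫ s in (0:ℝ)..t, (t - s) ^ (-α) * deriv f s

/-- The two-parameter Mittag-Leffler function `E_{α,β}(z) = ∑_{k≥0} z^k/Γ(αk+β)`;
`E_α = E_{α,1}`. -/
noncomputable def ml (α β z : ℝ) : ℝ := ∑' k : ℕ, z ^ k / Real.Gamma (α * k + β)


lemma gamma_lower (x R : ℝ) (hx : 1 ≤ x) (hR : 0 < R) :
    R ^ (x - 1) * Real.exp (-R) ≤ Real.Gamma x := by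
  rw [Real.Gamma_eq_integral (by linarith)]
  have hc := Real.GammaIntegral_convergent (s := x) (by linarith)
  have h1 : ∫ y in Ioi R, Real.exp (-y) * R ^ (x - 1) ≤
      ∫ y in Ioi R, Real.exp (-y) * y ^ (x - 1) := by
    apply setIntegral_mono_on
    · exact (integrableOn_exp_neg_Ioi R).mul_const _
    · exact hc.mono_set (Ioi_subset_Ioi hR.le)
    · exact measurableSet_Ioi
    · intro y hy
      have hy : R < y := hy
      gcongr
  have h2 : ∫ y in Ioi R, Real.exp (-y) * y ^ (x - 1) ≤
      ∫ y in Ioi 0, Real.exp (-y) * y ^ (x - 1) := by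
    apply setIntegral_mono_set hc
    · filter_upwards [ae_restrict_mem measurableSet_Ioi] with y hy
      have hy : 0 < y := hy
      simp only [Pi.zero_apply]
      positivity
    · exact (Ioi_subset_Ioi hR.le).eventuallyLE
  rw [integral_mul_const, integral_exp_neg_Ioi] at h1
  linarith

lemma ml_summable (α β z : ℝ) (hα : 0 < α) (hβ : 0 < β) :
    Summable (fun k : ℕ => z ^ k / Real.Gamma (α * k + β)) := by
  obtain ⟨R, hR, hRz⟩ : ∃ R : ℝ, 0 < R ∧ R ^ α = 2 * (|z| + 1) := by
    refine ⟨(2 * (|z| + 1)) ^ α⁻¹, by positivity, ?_⟩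
    rw [← Real.rpow_mul (by positivity), inv_mul_cancel₀ hα.ne', Real.rpow_one]
  have hgeo : Summable (fun k : ℕ => (Real.exp R * R ^ (1 - β)) * (1 / 2 : ℝ) ^ k) :=
    (summable_geometric_of_lt_one (by norm_num) (by norm_num)).mul_left _
  refine Summable.of_norm_bounded_eventually_nat hgeo ?_
  obtain ⟨N, hN⟩ := exists_nat_ge (1 / α)
  filter_upwards [eventually_ge_atTop N] with k hk
  have hk' : 1 ≤ α * k := by
    have : (N : ℝ) ≤ k := by exact_mod_cast hk
    have : 1 / α ≤ k := hN.trans this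
    rw [div_le_iff₀ hα] at this
    linarith
  have hG := gamma_lower (α * k + β) R (by linarith) hR
  have hGp : 0 < Real.Gamma (α * k + β) := Real.Gamma_pos_of_pos (by linarith)
  rw [norm_div, norm_pow, Real.norm_eq_abs, Real.norm_of_nonneg hGp.le, div_le_iff₀ hGp]
  have e1 : R ^ (α * k + β - 1) = (2 * (|z| + 1)) ^ k * R ^ (β - 1) := by
    rw [show α * k + β - 1 = α * k + (β - 1) by ring, Real.rpow_add hR, Real.rpow_mul hR.le, hRz,
      Real.rpow_natCast]
  have e2 : R ^ (1 - β) * R ^ (β - 1) = 1 := by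
    rw [← Real.rpow_add hR]; simp
  have e3 : Real.exp R * Real.exp (-R) = 1 := by rw [← Real.exp_add]; simp
  calc |z| ^ k ≤ (|z| + 1) ^ k := by gcongr; linarith
    _ = (Real.exp R * R ^ (1 - β)) * (1 / 2 : ℝ) ^ k * (R ^ (α * k + β - 1) * Real.exp (-R)) := by
      rw [e1, mul_pow]
      calc (|z| + 1) ^ k = (R ^ (1 - β) * R ^ (β - 1)) * (Real.exp R * Real.exp (-R)) *
            ((1 / 2 : ℝ) * 2) ^ k * (|z| + 1) ^ k := by rw [e2, e3]; norm_num
        _ = _ := by rw [mul_pow]; ring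
    _ ≤ _ := by gcongr

lemma ml_continuous (α β : ℝ) (hα : 0 < α) (hβ : 0 < β) : Continuous (ml α β) := by
  rw [continuous_iff_continuousAt]
  intro z
  have : ContinuousOn (ml α β) (Metric.ball 0 (|z| + 1)) := by
    unfold ml
    refine continuousOn_tsum (u := fun k : ℕ => (|z| + 1) ^ k / Real.Gamma (α * k + β))
      (fun k => by fun_prop) (ml_summable α β _ hα hβ) ?_
    intro k x hx
    have hGp : 0 < Real.Gamma (α * k + β) := Real.Gamma_pos_of_pos (by positivity)
    rw [norm_div, norm_pow, Real.norm_of_nonneg hGp.le]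
    have : ‖x‖ ≤ |z| + 1 := by simpa using (le_of_lt (by simpa using hx))
    gcongr
  exact this.continuousAt (Metric.isOpen_ball.mem_nhds (by simp))

lemma beta_real (a b t : ℝ) (ha : 0 < a) (hb : 0 < b) (ht : 0 < t) :
    ∫ s in (0:ℝ)..t, (t - s) ^ (b - 1) * s ^ (a - 1) =
      Real.Gamma a * Real.Gamma b / Real.Gamma (a + b) * t ^ (a + b - 1) := by
  have h := Complex.betaIntegral_scaled (a : ℂ) (b : ℂ) ht
  rw [Complex.betaIntegral_eq_Gamma_mul_div _ _ (by simpa) (by simpa)] at h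
  have : ∫ x in (0:ℝ)..t, (x : ℂ) ^ ((a : ℂ) - 1) * ((t : ℂ) - x) ^ ((b : ℂ) - 1) =
      ∫ x in (0:ℝ)..t, (((t - x) ^ (b - 1) * x ^ (a - 1) : ℝ) : ℂ) := by
    apply intervalIntegral.integral_congr
    intro x hx
    rw [uIcc_of_le ht.le] at hx
    have e1 := Complex.ofReal_cpow hx.1 (a - 1)
    have e2 := Complex.ofReal_cpow (sub_nonneg.2 hx.2) (b - 1)
    push_cast at e1 e2 ⊢
    rw [e1, e2, mul_comm]
  rw [this, intervalIntegral.integral_ofReal] at h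
  have e3 := Complex.ofReal_cpow ht.le (a + b - 1)
  push_cast at e3
  rw [← e3, ← Complex.ofReal_add] at h
  simp only [Complex.Gamma_ofReal] at h
  norm_cast at h
  rw [h, mul_comm]

lemma beta_int (a b t : ℝ) (ha : 0 < a) (hb : 0 < b) (ht : 0 < t) :
    IntervalIntegrable (fun s => (t - s) ^ (b - 1) * s ^ (a - 1)) volume 0 t := by
  by_contra hcon
  have h := beta_real a b t ha hb ht
  rw [intervalIntegral.integral_undef hcon] at h
  have h1 := Real.Gamma_pos_of_pos ha
  have h2 := Real.Gamma_pos_of_pos hb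
  have h3 := Real.Gamma_pos_of_pos (add_pos ha hb)
  have : 0 < Real.Gamma a * Real.Gamma b / Real.Gamma (a + b) * t ^ (a + b - 1) := by positivity
  linarith

lemma kernel_int (α lam t : ℝ) (hα : 0 < α) :
    IntervalIntegrable (fun s => s ^ (α - 1) * ml α α (-lam * s ^ α)) volume 0 t := by
  apply IntervalIntegrable.mul_continuousOn
  · exact intervalIntegral.intervalIntegrable_rpow' (by linarith)
  · apply Continuous.continuousOn
    have := Real.continuous_rpow_const hα.le
    exact (ml_continuous α α hα hα).comp (by fun_prop)

lemma kernel_frac (α lam b t : ℝ) (hα : 0 < α) (hb : 0 < b) (ht : 0 < t) :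
    ∫ s in (0:ℝ)..t, (t - s) ^ (b - 1) * (s ^ (α - 1) * ml α α (-lam * s ^ α)) =
      Real.Gamma b * t ^ (α + b - 1) * ml α (α + b) (-lam * t ^ α) := by
  set G : ℕ → ℝ → ℝ := fun k s =>
    ((-lam) ^ k / Real.Gamma (α * k + α)) * ((t - s) ^ (b - 1) * s ^ ((α * k + α) - 1)) with hG
  have hGint : ∀ k, IntegrableOn (G k) (Ioc 0 t) := by
    intro k
    have := (beta_int (α * k + α) b t (by positivity) hb ht).const_mul
      ((-lam) ^ k / Real.Gamma (α * k + α))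
    rwa [intervalIntegrable_iff_integrableOn_Ioc_of_le ht.le] at this
  have hval : ∀ (k : ℕ) (d : ℝ), d / Real.Gamma (α * k + α) *
      ∫ s in Ioc 0 t, (t - s) ^ (b - 1) * s ^ ((α * k + α) - 1) =
      Real.Gamma b * t ^ (α + b - 1) * ((d * (t ^ α) ^ k) / Real.Gamma (α * k + (α + b))) := by
    intro k d
    rw [← intervalIntegral.integral_of_le ht.le, beta_real _ _ _ (by positivity) hb ht]
    have h1 : 0 < Real.Gamma (α * k + α) := Real.Gamma_pos_of_pos (by positivity)
    have : t ^ (α * k + α + b - 1) = t ^ (α + b - 1) * (t ^ α) ^ k := by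
      rw [← Real.rpow_natCast, ← Real.rpow_mul ht.le, ← Real.rpow_add ht]
      ring_nf
    rw [this, add_assoc (α * k : ℝ)]
    field_simp
  have hsum := hasSum_integral_of_summable_integral_norm (μ := volume.restrict (Ioc 0 t)) hGint ?_
  · rw [intervalIntegral.integral_of_le ht.le, ml, ← tsum_mul_left]
    have hI : ∫ s in Ioc 0 t, (t - s) ^ (b - 1) * (s ^ (α - 1) * ml α α (-lam * s ^ α)) =
        ∫ s in Ioc 0 t, ∑' k, G k s := by
      apply setIntegral_congr_fun measurableSet_Ioc
      intro s hs
      simp only [ml, ← tsum_mul_left]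
      congr 1
      ext k
      have : s ^ (α * k + α - 1) = s ^ (α - 1) * (s ^ α) ^ k := by
        rw [← Real.rpow_natCast, ← Real.rpow_mul hs.1.le, ← Real.rpow_add hs.1]
        ring_nf
      simp only [hG]
      rw [this, mul_pow]
      ring
    rw [hI, ← hsum.tsum_eq]
    congr 1
    ext k
    simp only [hG]
    rw [integral_const_mul, hval, mul_pow]
  · have : ∀ k, ∫ s in Ioc 0 t, ‖G k s‖ =
        Real.Gamma b * t ^ (α + b - 1) * ((|lam| * (t ^ α)) ^ k / Real.Gamma (α * k + (α + b))) := by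
      intro k
      rw [mul_pow, ← hval, ← integral_const_mul]
      apply setIntegral_congr_fun measurableSet_Ioc
      intro s hs
      have h1 : 0 < Real.Gamma (α * k + α) := Real.Gamma_pos_of_pos (by positivity)
      have h2 : 0 ≤ t - s := sub_nonneg.2 hs.2
      have h3 : 0 ≤ s := hs.1.le
      simp only [hG]
      rw [norm_mul, norm_div, norm_pow, norm_neg, Real.norm_eq_abs lam, Real.norm_of_nonneg h1.le,
        Real.norm_of_nonneg (by positivity)]
    simp_rw [this]
    exact (ml_summable _ _ _ hα (by positivity)).mul_left _

lemma kernel_u (α lam t : ℝ) (hα : 0 < α) (ht : 0 ≤ t) :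
    ml α 1 (-lam * t ^ α) = 1 - lam * ∫ s in (0:ℝ)..t, s ^ (α - 1) * ml α α (-lam * s ^ α) := by
  have h0 : ml α 1 (-lam * t ^ α) = 1 + (-lam * t ^ α) * ml α (α + 1) (-lam * t ^ α) := by
    unfold ml
    rw [(ml_summable α 1 (-lam * t ^ α) hα one_pos).tsum_eq_zero_add, ← tsum_mul_left]
    congr 1
    · simp
    · congr 1
      ext k
      push_cast
      rw [show α * (k + 1) + 1 = α * k + (α + 1) by ring]
      ring
  rcases ht.eq_or_lt with rfl | ht
  · rw [h0]; simp [Real.zero_rpow hα.ne']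
  have := kernel_frac α lam 1 t hα one_pos ht
  simp only [sub_self, Real.rpow_zero, one_mul, Real.Gamma_one, add_sub_cancel_right] at this
  rw [this, h0]
  ring

open ContinuousLinearMap Convolution in
lemma cea (f g : ℝ → ℝ) (M x : ℝ) (hf : Integrable f) (hg : AEStronglyMeasurable g volume)
    (hM : ∀ y, ‖g y‖ ≤ M) : ConvolutionExistsAt f g x (mul ℝ ℝ) volume := by
  refine BddAbove.convolutionExistsAt (s := univ) _ ?_ MeasurableSet.univ (subset_univ _)
    hf.integrableOn hg
  refine ⟨M, ?_⟩
  rintro _ ⟨y, -, rfl⟩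
  exact hM y

lemma conv_fun (p q : ℝ → ℝ) (t x : ℝ) (hx : x ≤ t) :
    (fun s => (Ioo 0 t).indicator p s * (Ioo 0 t).indicator q (x - s)) =
      (Ioo 0 x).indicator (fun s => p s * q (x - s)) := by
  ext s
  by_cases hs : s ∈ Ioo 0 x
  · have h1 : s ∈ Ioo 0 t := ⟨hs.1, hs.2.trans_le hx⟩
    have h2 : x - s ∈ Ioo 0 t := ⟨by linarith [hs.2], by linarith [hs.1]⟩
    simp [indicator_of_mem hs, indicator_of_mem h1, indicator_of_mem h2]
  · rw [indicator_of_notMem hs]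
    by_cases h1 : s ∈ Ioo 0 t
    · have h2 : x - s ∉ Ioo 0 t := fun h => hs ⟨h1.1, by linarith [h.1]⟩
      rw [indicator_of_notMem h2, mul_zero]
    · rw [indicator_of_notMem h1, zero_mul]

lemma conv_trunc (p q : ℝ → ℝ) (t x : ℝ) (hx0 : 0 ≤ x) (hx : x ≤ t) :
    ∫ s, (Ioo 0 t).indicator p s * (Ioo 0 t).indicator q (x - s) =
      ∫ s in (0:ℝ)..x, p s * q (x - s) := by
  rw [conv_fun p q t x hx, integral_indicator measurableSet_Ioo, intervalIntegral.integral_of_le hx0,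
    integral_Ioc_eq_integral_Ioo]

lemma int_trunc (f : ℝ → ℝ) (t : ℝ) (ht : 0 ≤ t) (hf : IntervalIntegrable f volume 0 t) :
    Integrable ((Ioo 0 t).indicator f) := by
  rw [integrable_indicator_iff measurableSet_Ioo]
  exact (intervalIntegrable_iff_integrableOn_Ioo_of_le ht).1 hf

open ContinuousLinearMap Convolution in
lemma conv_integrable (f g : ℝ → ℝ) (t : ℝ) (ht : 0 ≤ t) (hf : IntervalIntegrable f volume 0 t)
    (hg : IntervalIntegrable g volume 0 t) :
    IntervalIntegrable (fun x => ∫ s in (0:ℝ)..x, f s * g (x - s)) volume 0 t := by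
  have h := Integrable.integrable_convolution (mul ℝ ℝ) (int_trunc f t ht hf) (int_trunc g t ht hg)
  rw [intervalIntegrable_iff_integrableOn_Ioo_of_le ht]
  refine h.integrableOn.congr_fun ?_ measurableSet_Ioo
  intro x hx
  simp only [convolution_def, mul_apply']
  exact conv_trunc f g t x hx.1.le hx.2.le

open ContinuousLinearMap Convolution in
lemma conv_assoc (f g k : ℝ → ℝ) (t : ℝ) (ht : 0 ≤ t) (hf : IntervalIntegrable f volume 0 t)
    (hg : IntervalIntegrable g volume 0 t) (hk : Continuous k) :
    IntervalIntegrable (fun s => f s * ∫ r in (0:ℝ)..(t - s), g r * k (t - s - r)) volume 0 t ∧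
    ∫ s in (0:ℝ)..t, f s * (∫ r in (0:ℝ)..(t - s), g r * k (t - s - r)) =
      ∫ s in (0:ℝ)..t, (∫ r in (0:ℝ)..s, f r * g (s - r)) * k (t - s) := by
  set f1 := (Ioo 0 t).indicator f with hf1
  set g1 := (Ioo 0 t).indicator g with hg1
  set k1 := (Ioo 0 t).indicator k with hk1
  have if1 : Integrable f1 := int_trunc f t ht hf
  have ig1 : Integrable g1 := int_trunc g t ht hg
  have ik1 : Integrable k1 := int_trunc k t ht (hk.intervalIntegrable _ _)
  obtain ⟨M, hM⟩ : ∃ M, ∀ y, ‖k1 y‖ ≤ M := by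
    obtain ⟨M, hM⟩ := (isCompact_Icc (a := 0) (b := t)).exists_bound_of_continuousOn hk.continuousOn
    refine ⟨M, fun y => ?_⟩
    by_cases hy : y ∈ Ioo 0 t
    · rw [hk1, indicator_of_mem hy]; exact hM y ⟨hy.1.le, hy.2.le⟩
    · rw [hk1, indicator_of_notMem hy, norm_zero]
      exact (norm_nonneg _).trans (hM 0 ⟨le_rfl, ht⟩)
  have ex1 : ∀ x, ConvolutionExistsAt (fun x => ‖g1 x‖) (fun x => ‖k1 x‖) x (mul ℝ ℝ) volume :=
    fun x => cea _ _ M x ig1.norm ik1.norm.aestronglyMeasurable (by simpa using hM)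
  have bnd : ∀ (a b : ℝ → ℝ), Integrable a → (∀ y, ‖b y‖ ≤ M) → ∀ y,
      ‖(a ⋆[mul ℝ ℝ, volume] b) y‖ ≤ ∫ s, ‖a s‖ * M := by
    intro a b ia hb y
    rw [convolution_def]
    refine norm_integral_le_of_norm_le (ia.norm.mul_const M) (Eventually.of_forall fun s => ?_)
    simp only [mul_apply', norm_mul]
    exact mul_le_mul_of_nonneg_left (hb _) (norm_nonneg _)
  have hassoc := convolution_assoc (mul ℝ ℝ) (mul ℝ ℝ) (mul ℝ ℝ) (mul ℝ ℝ)
    (f := f1) (g := g1) (k := k1) (μ := volume) (ν := volume) (x₀ := t)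
    (by intro x y z; simp [mul_assoc])
    if1.aestronglyMeasurable ig1.aestronglyMeasurable ik1.aestronglyMeasurable
    (Integrable.ae_convolution_exists (mul ℝ ℝ) if1 ig1)
    (Eventually.of_forall ex1)
    (cea _ _ _ t if1.norm
      (Integrable.integrable_convolution (mul ℝ ℝ) ig1.norm ik1.norm).aestronglyMeasurable
      (bnd _ _ ig1.norm (by simpa using hM)))
  have hex : ConvolutionExistsAt f1 (g1 ⋆[mul ℝ ℝ, volume] k1) t (mul ℝ ℝ) volume :=
    cea _ _ _ t if1 (Integrable.integrable_convolution (mul ℝ ℝ) ig1 ik1).aestronglyMeasurable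
      (bnd _ _ ig1 hM)
  have ptw : ∀ s ∈ Ioo 0 t, f1 s * (g1 ⋆[mul ℝ ℝ, volume] k1) (t - s) =
      f s * ∫ r in (0:ℝ)..(t - s), g r * k (t - s - r) := by
    intro s hs
    rw [hf1, indicator_of_mem hs, convolution_def]
    simp only [mul_apply']
    rw [conv_trunc g k t (t - s) (by linarith [hs.2]) (by linarith [hs.1])]
  constructor
  · rw [intervalIntegrable_iff_integrableOn_Ioo_of_le ht]
    refine (Integrable.integrableOn hex).congr_fun ?_ measurableSet_Ioo
    intro s hs
    simp only [mul_apply']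
    exact ptw s hs
  · rw [intervalIntegral.integral_of_le ht, intervalIntegral.integral_of_le ht,
      integral_Ioc_eq_integral_Ioo, integral_Ioc_eq_integral_Ioo,
      ← setIntegral_congr_fun measurableSet_Ioo ptw]
    rw [convolution_def, convolution_def] at hassoc
    simp only [mul_apply'] at hassoc
    have z1 : ∀ s ∉ Ioo 0 t, f1 s * (g1 ⋆[mul ℝ ℝ, volume] k1) (t - s) = 0 := by
      intro s hs; rw [hf1, indicator_of_notMem hs, zero_mul]
    have z2 : ∀ s ∉ Ioo 0 t, (f1 ⋆[mul ℝ ℝ, volume] g1) s * k1 (t - s) = 0 := by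
      intro s hs
      have : t - s ∉ Ioo 0 t := fun h => hs ⟨by linarith [h.2], by linarith [h.1]⟩
      rw [hk1, indicator_of_notMem this, mul_zero]
    rw [setIntegral_eq_integral_of_forall_compl_eq_zero z1, ← hassoc,
      ← setIntegral_eq_integral_of_forall_compl_eq_zero z2]
    apply setIntegral_congr_fun measurableSet_Ioo
    intro s hs
    have : t - s ∈ Ioo 0 t := ⟨by linarith [hs.2], by linarith [hs.1]⟩
    simp only [hk1]
    rw [indicator_of_mem this, convolution_def]
    simp only [mul_apply']
    rw [conv_trunc f g t s hs.1.le hs.2.le]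

lemma exists_ext (T : ℝ) (hT : 0 < T) (F : ℝ → ℝ) (hF : ContDiffOn ℝ 1 F (Set.Icc 0 T)) :
    ∃ k : ℝ → ℝ, Continuous k ∧ ∀ x ∈ Icc 0 T, F x = F 0 + ∫ s in (0:ℝ)..x, k s := by
  have hc := hF.continuousOn_derivWithin (uniqueDiffOn_Icc hT) le_rfl
  refine ⟨IccExtend hT.le (Set.domRestrict (Icc 0 T) (derivWithin F (Icc 0 T))),
    hc.domRestrict.Icc_extend', fun x hx => ?_⟩
  rw [intervalIntegral.integral_eq_sub_of_hasDerivAt_of_le hx.1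
    (hF.continuousOn.mono (Icc_subset_Icc_right hx.2)) ?_
    (hc.domRestrict.Icc_extend'.intervalIntegrable _ _)]
  · ring
  · intro y hy
    have hy' : y ∈ Icc 0 T := ⟨hy.1.le, hy.2.le.trans hx.2⟩
    rw [IccExtend_of_mem _ _ hy', domRestrict_apply]
    exact ((hF.differentiableOn one_ne_zero y hy').hasDerivWithinAt).hasDerivAt
      (Icc_mem_nhds hy.1 (hy.2.trans_le hx.2))

lemma rev_conv (p q : ℝ → ℝ) (t : ℝ) :
    ∫ s in (0:ℝ)..t, p (t - s) * q s = ∫ s in (0:ℝ)..t, p s * q (t - s) := by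
  have := intervalIntegral.integral_comp_sub_left (a := 0) (b := t)
    (fun s => p s * q (t - s)) t
  simpa using this

lemma int_cont (K : ℝ → ℝ) (hK : ∀ t, IntervalIntegrable K volume 0 t) :
    Continuous (fun x => ∫ r in (0:ℝ)..x, K r) := by
  apply intervalIntegral.continuous_primitive
  intro a b
  exact (hK a).symm.trans (hK b)

/-- `T_*` is a primitive. -/
lemma main_primitive (F k K : ℝ → ℝ) (T t : ℝ) (hk : Continuous k)
    (hFk : ∀ x ∈ Icc 0 T, F x = F 0 + ∫ s in (0:ℝ)..x, k s)
    (hK : ∀ t, IntervalIntegrable K volume 0 t) (ht : t ∈ Icc 0 T) :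
    ∫ τ in (0:ℝ)..t, K τ * F (t - τ) =
      F 0 * (∫ s in (0:ℝ)..t, K s) + ∫ s in (0:ℝ)..t, (∫ r in (0:ℝ)..s, K r) * k (t - s) := by
  have h1 := conv_assoc K (fun _ => 1) k t ht.1 (hK t) intervalIntegrable_const hk
  simp only [one_mul, mul_one] at h1
  rw [← h1.2, ← intervalIntegral.integral_const_mul,
    ← intervalIntegral.integral_add ((hK t).const_mul _) h1.1]
  apply intervalIntegral.integral_congr
  intro s hs
  rw [uIcc_of_le ht.1] at hs
  have := hFk (t - s) ⟨by linarith [hs.2], by linarith [hs.1, ht.2]⟩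
  have h2 : ∫ r in (0:ℝ)..(t - s), k (t - s - r) = ∫ r in (0:ℝ)..(t - s), k r := by
    simpa using rev_conv k (fun _ => 1) (t - s)
  simp only
  rw [this, h2]
  ring

lemma main_double (k K : ℝ → ℝ) (t : ℝ) (ht : 0 ≤ t) (hk : Continuous k)
    (hK : ∀ t, IntervalIntegrable K volume 0 t) :
    ∫ s in (0:ℝ)..t, (∫ r in (0:ℝ)..s, K r * k (s - r)) =
      ∫ s in (0:ℝ)..t, (∫ r in (0:ℝ)..s, K r) * k (t - s) := by
  have h1 := (conv_assoc (fun _ => 1) K k t ht intervalIntegrable_const (hK t) hk).2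
  simp only [one_mul] at h1
  have h2 : ∀ s, ∫ r in (0:ℝ)..s, K (s - r) = ∫ r in (0:ℝ)..s, K r := fun s => by
    simpa using rev_conv K (fun _ => 1) s
  simp only [h2] at h1
  rw [← h1]
  have := rev_conv (fun s => ∫ r in (0:ℝ)..s, K r * k (s - r)) (fun _ => 1) t
  simp only [mul_one] at this
  exact this.symm

theorem fractional_ode_solution (α lam c T : ℝ)
    (hα : 0 < α) (hα1 : α < 1) (hlam : 0 < lam) (hT : 0 < T)
    (F : ℝ → ℝ) (hF : ContDiffOn ℝ 1 F (Set.Icc 0 T)) :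
    let Tstar : ℝ → ℝ := fun t => c * ml α 1 (-lam * t ^ α) +
      ∫ τ in (0:ℝ)..t, τ ^ (α - 1) * ml α α (-lam * τ ^ α) * F (t - τ)
    ContinuousOn Tstar (Set.Icc 0 T) ∧ Tstar 0 = c ∧
      ∀ t ∈ Set.Ioc (0:ℝ) T, caputo α Tstar t = -lam * Tstar t + F t := by
  intro Tstar
  obtain ⟨k, hk, hFk⟩ := exists_ext T hT F hF
  set K : ℝ → ℝ := fun s => s ^ (α - 1) * ml α α (-lam * s ^ α) with hKdef
  have hK : ∀ t, IntervalIntegrable K volume 0 t := fun t => kernel_int α lam t hα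
  have hu : ∀ t, 0 ≤ t → ml α 1 (-lam * t ^ α) = 1 - lam * ∫ s in (0:ℝ)..t, K s :=
    fun t ht => kernel_u α lam t hα ht
  have hT1 : ∀ t ∈ Icc 0 T, Tstar t = c * (1 - lam * ∫ s in (0:ℝ)..t, K s) +
      (F 0 * (∫ s in (0:ℝ)..t, K s) + ∫ s in (0:ℝ)..t, (∫ r in (0:ℝ)..s, K r) * k (t - s)) := by
    intro t ht
    rw [← main_primitive F k K T t hk hFk hK ht, ← hu t ht.1]
  set w : ℝ → ℝ := fun s => (F 0 - lam * c) * K s + ∫ r in (0:ℝ)..s, K r * k (s - r) with hw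
  have hci : ∀ t, 0 ≤ t →
      IntervalIntegrable (fun s => ∫ r in (0:ℝ)..s, K r * k (s - r)) volume 0 t :=
    fun t ht => conv_integrable K k t ht (hK t) (hk.intervalIntegrable _ _)
  have hwi : ∀ t, 0 ≤ t → IntervalIntegrable w volume 0 t :=
    fun t ht => ((hK t).const_mul _).add (hci t ht)
  have hT2 : ∀ t ∈ Icc 0 T, Tstar t = c + ∫ s in (0:ℝ)..t, w s := by
    intro t ht
    rw [hT1 t ht, hw, intervalIntegral.integral_add ((hK t).const_mul _) (hci t ht.1),
      intervalIntegral.integral_const_mul, main_double k K t ht.1 hk hK]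
    ring
  refine ⟨?_, ?_, ?_⟩
  · have : ContinuousOn (fun t => c + ∫ s in (0:ℝ)..t, w s) (Icc 0 T) := by
      apply continuousOn_const.add
      have := intervalIntegral.continuousOn_primitive_interval (a := 0) (b := T) (f := w)
        (μ := volume) ?_
      · rwa [uIcc_of_le hT.le] at this
      · rw [uIcc_of_le hT.le]
        exact (intervalIntegrable_iff_integrableOn_Icc_of_le hT.le).1 (hwi T hT.le)
    exact this.congr hT2
  · rw [hT2 0 ⟨le_rfl, hT.le⟩]; simp
  · intro t ht
    have hderiv : ∀ᵐ s, s ∈ Ioo 0 T → deriv Tstar s = w s := by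
      filter_upwards [(hwi T hT.le).ae_hasDerivAt_integral] with s hs hsT
      rw [uIcc_of_le hT.le] at hs
      have h1 := (hs ⟨hsT.1.le, hsT.2.le⟩ 0 ⟨le_rfl, hT.le⟩).const_add c
      rw [← h1.deriv]
      apply EventuallyEq.deriv_eq
      filter_upwards [Icc_mem_nhds hsT.1 hsT.2] with x hx using hT2 x hx
    have hG : 0 < Real.Gamma (1 - α) := Real.Gamma_pos_of_pos (by linarith)
    have hI1 : ∫ s in (0:ℝ)..t, (t - s) ^ (-α) * deriv Tstar s =
        ∫ s in (0:ℝ)..t, (t - s) ^ (-α) * w s := by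
      rw [intervalIntegral.integral_of_le ht.1.le, intervalIntegral.integral_of_le ht.1.le,
        integral_Ioc_eq_integral_Ioo, integral_Ioc_eq_integral_Ioo]
      apply setIntegral_congr_ae measurableSet_Ioo
      filter_upwards [hderiv] with s hs hst
      rw [hs ⟨hst.1, hst.2.trans_le ht.2⟩]
    have hfrac : ∀ s, 0 < s → ∫ r in (0:ℝ)..s, (s - r) ^ (-α) * K r =
        Real.Gamma (1 - α) * ml α 1 (-lam * s ^ α) := by
      intro s hs
      have := kernel_frac α lam (1 - α) s hα (by linarith) hs
      simpa [hKdef] using this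
    have hi1 : IntervalIntegrable (fun s => (t - s) ^ (-α) * K s) volume 0 t := by
      have h1 := beta_int α (1 - α) t hα (by linarith) ht.1
      have h2 : Continuous fun s : ℝ => ml α α (-lam * s ^ α) := by
        have := Real.continuous_rpow_const hα.le
        exact (ml_continuous α α hα hα).comp (by fun_prop)
      have h3 := h1.mul_continuousOn h2.continuousOn
      simpa [hKdef, mul_assoc] using h3
    have hpow : IntervalIntegrable (fun s : ℝ => s ^ (-α)) volume 0 t :=
      intervalIntegral.intervalIntegrable_rpow' (by linarith)
    obtain ⟨ha1, ha2⟩ := conv_assoc (fun s => s ^ (-α)) K k t ht.1.le hpow (hK t) hk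
    have hi2 : IntervalIntegrable
        (fun s => (t - s) ^ (-α) * ∫ r in (0:ℝ)..s, K r * k (s - r)) volume 0 t := by
      have := (ha1.comp_sub_left t).symm
      simpa [hKdef] using this
    have hI2 : ∫ s in (0:ℝ)..t, (t - s) ^ (-α) * ∫ r in (0:ℝ)..s, K r * k (s - r) =
        Real.Gamma (1 - α) * ((∫ s in (0:ℝ)..t, k s) -
          lam * ∫ s in (0:ℝ)..t, (∫ r in (0:ℝ)..s, K r) * k (t - s)) := by
      rw [rev_conv (fun s => s ^ (-α)) (fun s => ∫ r in (0:ℝ)..s, K r * k (s - r)) t, ha2]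
      have hkk : ∫ s in (0:ℝ)..t, k s = ∫ s in (0:ℝ)..t, k (t - s) := by
        simpa using (rev_conv k (fun _ => 1) t).symm
      have hKc := int_cont K hK
      rw [hkk, ← intervalIntegral.integral_const_mul, ← intervalIntegral.integral_sub
        (Continuous.intervalIntegrable (by fun_prop) _ _)
        (Continuous.intervalIntegrable (by fun_prop) _ _),
        ← intervalIntegral.integral_const_mul]
      rw [intervalIntegral.integral_of_le ht.1.le, intervalIntegral.integral_of_le ht.1.le]
      apply setIntegral_congr_fun measurableSet_Ioc
      intro s hs
      have e1 := hfrac s hs.1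
      rw [rev_conv (fun s => s ^ (-α)) K s, hu s hs.1.le] at e1
      simp only
      rw [e1]
      ring
    have hI3 : ∫ s in (0:ℝ)..t, (t - s) ^ (-α) * w s = Real.Gamma (1 - α) *
        ((F 0 - lam * c) * (1 - lam * ∫ s in (0:ℝ)..t, K s) + ((∫ s in (0:ℝ)..t, k s) -
          lam * ∫ s in (0:ℝ)..t, (∫ r in (0:ℝ)..s, K r) * k (t - s))) := by
      have : ∀ s, (t - s) ^ (-α) * w s = (F 0 - lam * c) * ((t - s) ^ (-α) * K s) +
          (t - s) ^ (-α) * ∫ r in (0:ℝ)..s, K r * k (s - r) := by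
        intro s; simp only [hw]; ring
      simp only [this]
      rw [intervalIntegral.integral_add (hi1.const_mul _) hi2,
        intervalIntegral.integral_const_mul, hI2, hfrac t ht.1, hu t ht.1.le]
      ring
    have htI : t ∈ Icc 0 T := ⟨ht.1.le, ht.2⟩
    rw [caputo, hI1, hI3, hT1 t htI, hFk t htI, ← mul_assoc, one_div, inv_mul_cancel₀ hG.ne']
    ring
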